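/- Let N ≥ 2, let B ⊂ ℝ^N be a radial domain, let 𝓤 be a set of continuous functions on B, and define M = {e ∈ S : u(x) ≥ u(σ_e(x)) for all x ∈ B(e) and all u ∈ 𝓤}. Let P ⊆ ℝ^N be a two-dimensional linear subspace, and suppose there are two distinct points p₁, p₂ in the same connected component K_P of M ∩ P (with respect to the circle S ∩ P) such that u ≡ u ∘ σ_{p₁} and u ≡ u ∘ σ_{p₂} on B for every u ∈ 𝓤. Then K_P contains a closed half-circle, i.e., there is e' ∈ S ∩ P with {e ∈ S ∩ P : e·e' ≥ 0} ⊆ K_P. -/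

import Mathlib

/-!
The statement reduces to functions of one angle. Fix an orthonormal basis of `P`, write the points
of the circle as `circlePt a b φ`, and fix a component orthogonal to `P` and a radius; then each
`u ∈ 𝓤` becomes a `2π`-periodic function of the angle, on which `σ_e` with `e` at angle `α` acts
by `φ ↦ 2α + π - φ`.

The component `K` is connected, so it contains one of the two arcs between `p₁` and `p₂`
(`arc_subset_of_isPreconnected`). If `p₂ = -p₁`, that arc is a closed half-circle.

Otherwise the composition of the two symmetries makes the function periodic with a period not in
`2πℤ`, hence with a period in `(0, π]`. Under such a period the monotonicity inequality for any
`e ∈ M ∩ P` also yields its reverse (`symm_of_monotone_of_periodic`), so all directions in the arc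
are symmetry directions. Composing them gives arbitrarily small rotations, so the function is
constant in the angle (`const_of_symm_on_Icc`), and `M ∩ P` is the whole circle, which is
connected.
-/


open Set Metric Filter
open scoped RealInnerProductSpace

noncomputable section

variable {N : ℕ}

/-- Reflection through the hyperplane `H(e) = {x : ⟪x,e⟫ = 0}`:
`σ_e(x) = x - 2 (x·e) e`. -/
def reflHyp (e x : EuclideanSpace ℝ (Fin N)) : EuclideanSpace ℝ (Fin N) :=
  x - (2 * ⟪x, e⟫) • e

/-- The half domain `B(e) = {x ∈ B : x·e > 0}`. -/
def halfDom (B : Set (EuclideanSpace ℝ (Fin N))) (e : EuclideanSpace ℝ (Fin N)) :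
    Set (EuclideanSpace ℝ (Fin N)) := {x ∈ B | 0 < ⟪x, e⟫}

/-- A radial domain: an open ball or an open annulus centered at the origin. -/
def IsRadialDomain (B : Set (EuclideanSpace ℝ (Fin N))) : Prop :=
  (∃ R, 0 < R ∧ B = Metric.ball 0 R) ∨
  (∃ r R, 0 < r ∧ r < R ∧ B = {x : EuclideanSpace ℝ (Fin N) | r < ‖x‖ ∧ ‖x‖ < R})

/-- `u` is foliated Schwarz symmetric on `D` with respect to the unit vector `p`:
`u(x) ≥ u(y)` whenever `|x| = |y|` and `x·p ≥ y·p`.  (This is equivalent to axial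
symmetry with respect to `ℝp` together with monotonicity in the polar angle.) -/
def FoliatedSchwarzOn (D : Set (EuclideanSpace ℝ (Fin N)))
    (u : EuclideanSpace ℝ (Fin N) → ℝ) (p : EuclideanSpace ℝ (Fin N)) : Prop :=
  ∀ x ∈ D, ∀ y ∈ D, ‖x‖ = ‖y‖ → ⟪y, p⟫ ≤ ⟪x, p⟫ → u y ≤ u x

/-- The set `M = {e ∈ S : u ≥ u ∘ σ_e on B(e) for all u ∈ 𝓤}`. -/
def reflMonotoneSet (B : Set (EuclideanSpace ℝ (Fin N)))
    (𝓤 : Set (EuclideanSpace ℝ (Fin N) → ℝ)) : Set (EuclideanSpace ℝ (Fin N)) :=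
  {e | ‖e‖ = 1 ∧ ∀ u ∈ 𝓤, ∀ x ∈ halfDom B e, u (reflHyp e x) ≤ u x}

/-! ### Circles spanned by two orthonormal vectors -/

/-- The point at angle `φ` on the unit circle spanned by the orthonormal pair `a, b`. -/
def circlePt (a b : EuclideanSpace ℝ (Fin N)) (φ : ℝ) : EuclideanSpace ℝ (Fin N) :=
  Real.cos φ • a + Real.sin φ • b

lemma circlePt_continuous (a b : EuclideanSpace ℝ (Fin N)) : Continuous (circlePt a b) := by
  unfold circlePt
  fun_prop

lemma circlePt_add_int_mul_two_pi (a b : EuclideanSpace ℝ (Fin N)) (φ : ℝ) (n : ℤ) :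
    circlePt a b (φ + n * (2 * Real.pi)) = circlePt a b φ := by
  simp [circlePt, Real.cos_add_int_mul_two_pi, Real.sin_add_int_mul_two_pi]

/-- Every angle has a representative in a given half-open interval of length `2π`. -/
lemma exists_angle_mem_Ioc (s φ : ℝ) :
    ∃ n : ℤ, s < φ + n * (2 * Real.pi) ∧ φ + n * (2 * Real.pi) ≤ s + 2 * Real.pi := by
  have h := toIocMod_mem_Ioc Real.two_pi_pos s φ
  refine ⟨-toIocDiv Real.two_pi_pos s φ, ?_⟩
  have h2 : toIocMod Real.two_pi_pos s φ
      = φ + ((-toIocDiv Real.two_pi_pos s φ : ℤ) : ℝ) * (2 * Real.pi) := by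
    rw [toIocMod]; push_cast; rw [zsmul_eq_mul]; ring
  rw [← h2]
  exact h

lemma exists_polar (p q : ℝ) :
    ∃ ρ φ : ℝ, 0 ≤ ρ ∧ p = ρ * Real.cos φ ∧ q = ρ * Real.sin φ := by
  refine ⟨‖(⟨p, q⟩ : ℂ)‖, Complex.arg ⟨p, q⟩, norm_nonneg _, ?_, ?_⟩
  · rw [Complex.norm_mul_cos_arg]
  · rw [Complex.norm_mul_sin_arg]

section orthonormalPair

variable {a b : EuclideanSpace ℝ (Fin N)}

lemma inner_circlePt (haa : ⟪a, a⟫ = 1) (hbb : ⟪b, b⟫ = 1) (hab : ⟪a, b⟫ = 0) (φ ψ : ℝ) :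
    ⟪circlePt a b φ, circlePt a b ψ⟫ = Real.cos (φ - ψ) := by
  have hba : ⟪b, a⟫ = 0 := by rw [real_inner_comm]; exact hab
  simp only [circlePt, inner_add_left, inner_add_right, real_inner_smul_left,
    real_inner_smul_right, haa, hbb, hab, hba, Real.cos_sub]
  ring

lemma norm_circlePt (haa : ⟪a, a⟫ = 1) (hbb : ⟪b, b⟫ = 1) (hab : ⟪a, b⟫ = 0) (φ : ℝ) :
    ‖circlePt a b φ‖ = 1 := by
  have h := inner_circlePt haa hbb hab φ φ
  rw [sub_self, Real.cos_zero, real_inner_self_eq_norm_sq] at h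
  nlinarith [norm_nonneg (circlePt a b φ)]

lemma inner_perp_circlePt {w : EuclideanSpace ℝ (Fin N)} (hwa : ⟪w, a⟫ = 0)
    (hwb : ⟪w, b⟫ = 0) (φ : ℝ) : ⟪w, circlePt a b φ⟫ = 0 := by
  simp [circlePt, inner_add_right, real_inner_smul_right, hwa, hwb]

/-- In polar coordinates on the plane of `a, b`, the reflection in direction `α` acts on the
angle by `φ ↦ 2α + π - φ` and fixes the radius and the component orthogonal to the plane. -/
lemma reflHyp_circlePt (haa : ⟪a, a⟫ = 1) (hbb : ⟪b, b⟫ = 1) (hab : ⟪a, b⟫ = 0)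
    {w : EuclideanSpace ℝ (Fin N)} (hwa : ⟪w, a⟫ = 0) (hwb : ⟪w, b⟫ = 0) (ρ α φ : ℝ) :
    reflHyp (circlePt a b α) (w + ρ • circlePt a b φ)
      = w + ρ • circlePt a b (2 * α + Real.pi - φ) := by
  have hi : ⟪w + ρ • circlePt a b φ, circlePt a b α⟫ = ρ * Real.cos (φ - α) := by
    rw [inner_add_left, inner_perp_circlePt hwa hwb, real_inner_smul_left,
      inner_circlePt haa hbb hab, zero_add]
  rw [reflHyp, hi]
  obtain ⟨δ, rfl⟩ : ∃ δ, φ = α + δ := ⟨φ - α, by ring⟩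
  have hc : Real.cos (2 * α + Real.pi - (α + δ))
      = Real.cos (α + δ) - 2 * Real.cos δ * Real.cos α := by
    rw [show 2 * α + Real.pi - (α + δ) = (α - δ) + Real.pi by ring, Real.cos_add_pi,
      Real.cos_sub, Real.cos_add]
    ring
  have hs : Real.sin (2 * α + Real.pi - (α + δ))
      = Real.sin (α + δ) - 2 * Real.cos δ * Real.sin α := by
    rw [show 2 * α + Real.pi - (α + δ) = (α - δ) + Real.pi by ring, Real.sin_add_pi,
      Real.sin_sub, Real.sin_add]
    ring
  rw [add_sub_cancel_left]
  simp only [circlePt, hc, hs]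
  module

lemma norm_add_smul_circlePt (haa : ⟪a, a⟫ = 1) (hbb : ⟪b, b⟫ = 1) (hab : ⟪a, b⟫ = 0)
    {w : EuclideanSpace ℝ (Fin N)} (hwa : ⟪w, a⟫ = 0) (hwb : ⟪w, b⟫ = 0) (ρ φ ψ : ℝ) :
    ‖w + ρ • circlePt a b φ‖ = ‖w + ρ • circlePt a b ψ‖ := by
  have h : ∀ φ, ‖w + ρ • circlePt a b φ‖ ^ 2 = ‖w‖ ^ 2 + ρ ^ 2 := by
    intro φ
    rw [norm_add_sq_real, real_inner_smul_right, inner_perp_circlePt hwa hwb, norm_smul,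
      norm_circlePt haa hbb hab, mul_one, Real.norm_eq_abs, sq_abs]
    ring
  have := (h φ).trans (h ψ).symm
  exact (pow_left_inj₀ (norm_nonneg _) (norm_nonneg _) two_ne_zero).1 this

lemma exists_polar_decomp (haa : ⟪a, a⟫ = 1) (hbb : ⟪b, b⟫ = 1) (hab : ⟪a, b⟫ = 0)
    (x : EuclideanSpace ℝ (Fin N)) :
    ∃ (w : EuclideanSpace ℝ (Fin N)) (ρ φ : ℝ), ⟪w, a⟫ = 0 ∧ ⟪w, b⟫ = 0 ∧ 0 ≤ ρ ∧
      x = w + ρ • circlePt a b φ := by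
  obtain ⟨ρ, φ, hρ, h1, h2⟩ := exists_polar ⟪x, a⟫ ⟪x, b⟫
  have hba : ⟪b, a⟫ = 0 := by rw [real_inner_comm]; exact hab
  refine ⟨x - ⟪x, a⟫ • a - ⟪x, b⟫ • b, ρ, φ, ?_, ?_, hρ, ?_⟩
  · rw [inner_sub_left, inner_sub_left, real_inner_smul_left, real_inner_smul_left, haa, hba]
    ring
  · rw [inner_sub_left, inner_sub_left, real_inner_smul_left, real_inner_smul_left, hbb, hab]
    ring
  · rw [circlePt, smul_add, smul_smul, smul_smul, ← h1, ← h2]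
    abel

/-- A connected subset of the circle that contains the points at angles `α₁` and `α₂` contains
one of the two closed arcs joining them. If a point were missing from each arc, the line through
the two missing points would separate `K`. -/
lemma arc_subset_of_isPreconnected (haa : ⟪a, a⟫ = 1) (hbb : ⟪b, b⟫ = 1) (hab : ⟪a, b⟫ = 0)
    {K : Set (EuclideanSpace ℝ (Fin N))} (hK : IsPreconnected K)
    (hKc : ∀ x ∈ K, ∃ φ, x = circlePt a b φ) {α₁ α₂ : ℝ}
    (h1 : circlePt a b α₁ ∈ K) (h2 : circlePt a b α₂ ∈ K) :
    (∀ s ∈ Icc α₁ α₂, circlePt a b s ∈ K) ∨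
      (∀ s ∈ Icc α₂ (α₁ + 2 * Real.pi), circlePt a b s ∈ K) := by
  by_contra! hcon
  obtain ⟨⟨s, ⟨hs1, hs2⟩, hs⟩, ⟨t, ⟨ht1, ht2⟩, ht⟩⟩ := hcon
  have per := circlePt_add_int_mul_two_pi a b
  have hs1' : α₁ < s := lt_of_le_of_ne hs1 (by rintro rfl; exact hs h1)
  have hs2' : s < α₂ := lt_of_le_of_ne hs2 (by rintro rfl; exact hs h2)
  have ht1' : α₂ < t := lt_of_le_of_ne ht1 (by rintro rfl; exact ht h2)
  have ht2' : t < α₁ + 2 * Real.pi := lt_of_le_of_ne ht2 (by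
    rintro rfl
    have := per α₁ 1
    rw [Int.cast_one, one_mul] at this
    exact ht (this ▸ h1))
  -- The affine function vanishing at the two missing points.
  have key : ∀ φ, ⟪circlePt a b φ, circlePt a b ((s + t) / 2)⟫ - Real.cos ((t - s) / 2)
      = -2 * Real.sin ((φ - s) / 2) * Real.sin ((φ - t) / 2) := by
    intro φ
    rw [inner_circlePt haa hbb hab, Real.cos_sub_cos]
    congr 3 <;> ring_nf
  have hcont : ContinuousOn (fun x : EuclideanSpace ℝ (Fin N) =>
      ⟪x, circlePt a b ((s + t) / 2)⟫ - Real.cos ((t - s) / 2)) K := by fun_prop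
  have hneg : ⟪circlePt a b α₁, circlePt a b ((s + t) / 2)⟫ - Real.cos ((t - s) / 2) ≤ 0 := by
    rw [key]
    have p1 : Real.sin ((α₁ - s) / 2) ≤ 0 :=
      Real.sin_nonpos_of_nonpos_of_neg_pi_le (by linarith) (by linarith)
    have p2 : Real.sin ((α₁ - t) / 2) ≤ 0 :=
      Real.sin_nonpos_of_nonpos_of_neg_pi_le (by linarith) (by linarith)
    nlinarith [mul_nonneg_of_nonpos_of_nonpos p1 p2]
  have hpos : 0 ≤ ⟪circlePt a b α₂, circlePt a b ((s + t) / 2)⟫ - Real.cos ((t - s) / 2) := by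
    rw [key]
    have p1 : 0 ≤ Real.sin ((α₂ - s) / 2) :=
      Real.sin_nonneg_of_nonneg_of_le_pi (by linarith) (by linarith)
    have p2 : Real.sin ((α₂ - t) / 2) ≤ 0 :=
      Real.sin_nonpos_of_nonpos_of_neg_pi_le (by linarith) (by linarith)
    nlinarith [mul_nonneg p1 (neg_nonneg.2 p2)]
  obtain ⟨x, hxK, hx⟩ := hK.intermediate_value h1 h2 hcont ⟨hneg, hpos⟩
  obtain ⟨φ, rfl⟩ := hKc x hxK
  simp only [key] at hx
  have hfin : ∀ r, Real.sin ((φ - r) / 2) = 0 → circlePt a b φ = circlePt a b r := by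
    intro r hr
    obtain ⟨n, hn⟩ := Real.sin_eq_zero_iff.1 hr
    rw [← per r n]
    congr 1
    linarith
  rcases mul_eq_zero.1 hx with h | h
  · exact hs (hfin s (by linarith) ▸ hxK)
  · exact ht (hfin t h ▸ hxK)

end orthonormalPair

/-! ### Functions of the angle -/

/-- A `2π`-periodic function with a further period `ω ∉ 2πℤ` that is reflection monotone at the
angle `α` is symmetric at `α`. The two periods yield a period `c ∈ (0, π]`; with
`g t = f (α + π/2 + t)`, monotonicity reads `g t ≤ g (-t)` on `[0, π]`, and inserting `c - t`
for `t` gives the reverse inequality. -/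
lemma symm_of_monotone_of_periodic {f : ℝ → ℝ} {ω α : ℝ}
    (hf : Function.Periodic f (2 * Real.pi)) (hω : Function.Periodic f ω)
    (hω0 : ∀ n : ℤ, ω + n * (2 * Real.pi) ≠ 0)
    (hmono : ∀ φ, 0 < Real.cos (φ - α) → f (2 * α + Real.pi - φ) ≤ f φ) (φ : ℝ) :
    f (2 * α + Real.pi - φ) = f φ := by
  obtain ⟨c, hc0, hcpi, hc⟩ : ∃ c, 0 < c ∧ c ≤ Real.pi ∧ Function.Periodic f c := by
    obtain ⟨n, hn1, hn2⟩ := exists_angle_mem_Ioc (-Real.pi) ω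
    have hp : Function.Periodic f (ω + n * (2 * Real.pi)) := hω.add_period (hf.int_mul n)
    rcases lt_or_gt_of_ne (hω0 n) with h | h
    · exact ⟨-(ω + n * (2 * Real.pi)), by linarith, by linarith, hp.neg⟩
    · exact ⟨_, h, by linarith, hp⟩
  have hg : ∀ t ∈ Icc 0 Real.pi, f (α + Real.pi / 2 + t) ≤ f (α + Real.pi / 2 - t) := by
    rintro t ⟨ht0, ht1⟩
    rcases ht0.eq_or_lt with rfl | ht0
    · simp
    rcases ht1.eq_or_lt with rfl | ht1
    · -- At `t = π` both arguments agree modulo `2π`.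
      rw [← hf (α + Real.pi / 2 - Real.pi)]
      apply le_of_eq; congr 1; ring
    have := hmono (α + Real.pi / 2 - t) (by
      have : α + Real.pi / 2 - t - α = Real.pi / 2 - t := by ring
      rw [this, Real.cos_pi_div_two_sub]
      exact Real.sin_pos_of_pos_of_lt_pi ht0 ht1)
    convert this using 2
    ring
  have hsmall : ∀ t ∈ Icc 0 c, f (α + Real.pi / 2 + t) = f (α + Real.pi / 2 - t) := by
    rintro t ⟨ht0, ht1⟩
    refine le_antisymm (hg t ⟨ht0, ht1.trans hcpi⟩) ?_
    have h := hg (c - t) ⟨by linarith, by linarith⟩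
    have h3 := hc (α + Real.pi / 2 - (c - t))
    have e1 : α + Real.pi / 2 + (c - t) = α + Real.pi / 2 - t + c := by ring
    have e2 : α + Real.pi / 2 - (c - t) + c = α + Real.pi / 2 + t := by ring
    rw [e1, hc] at h
    rw [e2] at h3
    rwa [h3]
  -- Reduce the offset from `α + π/2` modulo the period `c`.
  set t := α + Real.pi / 2 - φ with ht
  obtain ⟨m1, m2⟩ := toIocMod_mem_Ioc hc0 0 t
  have hr := hsmall (toIocMod hc0 0 t) ⟨m1.le, by linarith⟩
  have hq : toIocMod hc0 0 t = t - toIocDiv hc0 0 t * c := by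
    rw [toIocMod, zsmul_eq_mul]
  have l : f (α + Real.pi / 2 + t) = f (α + Real.pi / 2 + toIocMod hc0 0 t) := by
    rw [← (hc.int_mul (toIocDiv hc0 0 t)) (α + Real.pi / 2 + toIocMod hc0 0 t), hq]
    congr 1; ring
  have r : f (α + Real.pi / 2 - t) = f (α + Real.pi / 2 - toIocMod hc0 0 t) := by
    rw [← (hc.int_mul (toIocDiv hc0 0 t)) (α + Real.pi / 2 - t), hq]
    congr 1; ring
  have hfin := l.trans (hr.trans r.symm)
  convert hfin using 2 <;> rw [ht] <;> ring

/-- A function symmetric at all angles of a nondegenerate interval has all small numbers as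
periods, hence is constant. -/
lemma const_of_symm_on_Icc {f : ℝ → ℝ} {s t : ℝ} (hst : s < t)
    (h : ∀ α ∈ Icc s t, ∀ φ, f (2 * α + Real.pi - φ) = f φ) (φ ψ : ℝ) : f φ = f ψ := by
  have hper : ∀ δ ∈ Icc 0 (t - s), Function.Periodic f (2 * δ) := by
    rintro δ ⟨h0, h1⟩ x
    have e1 := h s ⟨le_rfl, hst.le⟩ x
    have e2 := h (s + δ) ⟨by linarith, by linarith⟩ (2 * s + Real.pi - x)
    rw [← e1, ← e2]
    congr 1; ring
  have hts : 0 < 2 * (t - s) := by linarith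
  obtain ⟨m1, m2⟩ := toIocMod_mem_Ioc hts 0 (φ - ψ)
  have hq : toIocMod hts 0 (φ - ψ) = φ - ψ - toIocDiv hts 0 (φ - ψ) * (2 * (t - s)) := by
    rw [toIocMod, zsmul_eq_mul]
  have p1 := hper (toIocMod hts 0 (φ - ψ) / 2) ⟨by linarith, by linarith⟩ ψ
  have p2 := (hper (t - s) ⟨by linarith, le_rfl⟩).int_mul (toIocDiv hts 0 (φ - ψ))
    (ψ + 2 * (toIocMod hts 0 (φ - ψ) / 2))
  rw [← p1, ← p2, hq]
  congr 1; ring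

lemma IsRadialDomain.mem_of_norm_eq {B : Set (EuclideanSpace ℝ (Fin N))} (hB : IsRadialDomain B)
    {x y : EuclideanSpace ℝ (Fin N)} (hxy : ‖x‖ = ‖y‖) (hx : x ∈ B) : y ∈ B := by
  rcases hB with ⟨R, -, rfl⟩ | ⟨r, R, -, -, rfl⟩
  · simpa [← hxy] using hx
  · simpa [← hxy] using hx

lemma exists_orthonormal_pair (P : Submodule ℝ (EuclideanSpace ℝ (Fin N)))
    (hP : Module.finrank ℝ P = 2) :
    ∃ a b : EuclideanSpace ℝ (Fin N), ⟪a, a⟫ = 1 ∧ ⟪b, b⟫ = 1 ∧ ⟪a, b⟫ = 0 ∧ a ∈ P ∧ b ∈ P ∧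
      ∀ e ∈ P, ‖e‖ = 1 → ∃ φ, e = circlePt a b φ := by
  let c := (stdOrthonormalBasis ℝ P).reindex (finCongr hP)
  have hc : ∀ i j, ⟪(c i : EuclideanSpace ℝ (Fin N)), c j⟫ = if i = j then 1 else 0 := by
    intro i j
    have := orthonormal_iff_ite.1 c.orthonormal i j
    simpa using this
  have haa := hc 0 0
  have hbb := hc 1 1
  have hab := hc 0 1
  simp only [if_true, zero_ne_one, if_false] at haa hbb hab
  refine ⟨c 0, c 1, haa, hbb, hab, (c 0).2, (c 1).2, ?_⟩
  intro e he hn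
  have hrep := c.sum_repr ⟨e, he⟩
  rw [Fin.sum_univ_two] at hrep
  obtain ⟨ρ, φ, hρ, h1, h2⟩ := exists_polar (c.repr ⟨e, he⟩ 0) (c.repr ⟨e, he⟩ 1)
  have hee : e = ρ • circlePt (c 0 : EuclideanSpace ℝ (Fin N)) (c 1) φ := by
    have := congrArg Subtype.val hrep
    simp only [Submodule.coe_add, Submodule.coe_smul] at this
    rw [h1, h2] at this
    rw [← this, circlePt, smul_add, smul_smul, smul_smul]
  have hρ1 : ρ = 1 := by
    rw [hee, norm_smul, norm_circlePt haa hbb hab, mul_one, Real.norm_eq_abs,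
      abs_of_nonneg hρ] at hn
    exact hn
  exact ⟨φ, by rw [hee, hρ1, one_smul]⟩

/-! ### The half-circle -/

/-- claim `(eq:2)` in the proof of Proposition
`sec:char-foli-schw-1`: if two distinct points `p₁, p₂` of a connected
component `K_P` of `M ∩ P` (for a two-dimensional subspace `P`) are symmetry
directions for every `u ∈ 𝓤`, then `K_P` contains a closed half-circle of
`S ∩ P`. -/
theorem connected_component_contains_halfcircle
    (N : ℕ) (hN : 2 ≤ N)
    (B : Set (EuclideanSpace ℝ (Fin N))) (hB : IsRadialDomain B)
    (𝓤 : Set (EuclideanSpace ℝ (Fin N) → ℝ))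
    (h𝓤 : ∀ u ∈ 𝓤, ContinuousOn u B)
    (P : Submodule ℝ (EuclideanSpace ℝ (Fin N)))
    (hP : Module.finrank ℝ P = 2)
    (p₁ p₂ : EuclideanSpace ℝ (Fin N)) (hne : p₁ ≠ p₂)
    (hp₁ : p₁ ∈ reflMonotoneSet B 𝓤 ∩ (P : Set (EuclideanSpace ℝ (Fin N))))
    (hp₂ : p₂ ∈ connectedComponentIn
      (reflMonotoneSet B 𝓤 ∩ (P : Set (EuclideanSpace ℝ (Fin N)))) p₁)
    (hsym₁ : ∀ u ∈ 𝓤, ∀ x ∈ B, u (reflHyp p₁ x) = u x)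
    (hsym₂ : ∀ u ∈ 𝓤, ∀ x ∈ B, u (reflHyp p₂ x) = u x) :
    ∃ e' : EuclideanSpace ℝ (Fin N), ‖e'‖ = 1 ∧ e' ∈ P ∧
      ∀ e : EuclideanSpace ℝ (Fin N), ‖e‖ = 1 → e ∈ P → 0 ≤ ⟪e, e'⟫ →
        e ∈ connectedComponentIn
          (reflMonotoneSet B 𝓤 ∩ (P : Set (EuclideanSpace ℝ (Fin N)))) p₁ := by
  obtain ⟨a, b, haa, hbb, hab, haP, hbP, hcirc⟩ := exists_orthonormal_pair P hP
  set C := reflMonotoneSet B 𝓤 ∩ (P : Set (EuclideanSpace ℝ (Fin N))) with hC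
  set K := connectedComponentIn C p₁ with hKdef
  have hKC : K ⊆ C := connectedComponentIn_subset C p₁
  have hcP : ∀ φ, circlePt a b φ ∈ P := fun φ =>
    P.add_mem (P.smul_mem _ haP) (P.smul_mem _ hbP)
  have hKc : ∀ x ∈ K, ∃ φ, x = circlePt a b φ := fun x hx =>
    hcirc x (hKC hx).2 (hKC hx).1.1
  have hp₁K : p₁ ∈ K := mem_connectedComponentIn hp₁
  have hKpre : IsPreconnected K := isPreconnected_connectedComponentIn
  obtain ⟨α₁, hα₁⟩ := hKc p₁ hp₁K
  obtain ⟨α₂, hα₂, hlt, hle⟩ : ∃ α₂, p₂ = circlePt a b α₂ ∧ α₁ < α₂ ∧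
      α₂ ≤ α₁ + 2 * Real.pi := by
    obtain ⟨β, hβ⟩ := hKc p₂ hp₂
    obtain ⟨n, hn1, hn2⟩ := exists_angle_mem_Ioc α₁ β
    exact ⟨_, by rw [circlePt_add_int_mul_two_pi]; exact hβ, hn1, hn2⟩
  have hlt' : α₂ < α₁ + 2 * Real.pi := lt_of_le_of_ne hle (by
    intro h
    have := circlePt_add_int_mul_two_pi a b α₁ 1
    rw [Int.cast_one, one_mul, ← h, ← hα₁, ← hα₂] at this
    exact hne this.symm)
  have harc := arc_subset_of_isPreconnected haa hbb hab hKpre hKc (hα₁ ▸ hp₁K) (hα₂ ▸ hp₂)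
  by_cases hanti : α₂ = α₁ + Real.pi
  · -- Antipodal points: the arc between them is already a half-circle.
    have hhalf : ∀ s, (∀ φ ∈ Icc s (s + Real.pi), circlePt a b φ ∈ K) →
        ∃ e' : EuclideanSpace ℝ (Fin N), ‖e'‖ = 1 ∧ e' ∈ P ∧
          ∀ e : EuclideanSpace ℝ (Fin N), ‖e‖ = 1 → e ∈ P → 0 ≤ ⟪e, e'⟫ → e ∈ K := by
      intro s hs
      refine ⟨circlePt a b (s + Real.pi / 2), norm_circlePt haa hbb hab _, hcP _, ?_⟩
      intro e he heP hpos
      obtain ⟨φ, rfl⟩ := hcirc e heP he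
      obtain ⟨n, hn1, hn2⟩ := exists_angle_mem_Ioc (s - Real.pi / 2) φ
      rw [← circlePt_add_int_mul_two_pi a b φ n] at hpos ⊢
      rw [inner_circlePt haa hbb hab] at hpos
      set ψ := φ + n * (2 * Real.pi)
      apply hs
      constructor
      · by_contra! hc
        have := Real.cos_neg_of_pi_div_two_lt_of_lt (x := s + Real.pi / 2 - ψ)
          (by linarith) (by linarith)
        rw [← Real.cos_neg, neg_sub] at this
        linarith
      · by_contra! hc
        rcases hn2.lt_or_eq with hn2 | hn2
        · have := Real.cos_neg_of_pi_div_two_lt_of_lt (x := ψ - (s + Real.pi / 2))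
            (by linarith) (by linarith)
          linarith
        · rw [hn2, show s - Real.pi / 2 + 2 * Real.pi - (s + Real.pi / 2) = Real.pi by ring,
            Real.cos_pi] at hpos
          linarith
    rcases harc with h | h
    · exact hhalf α₁ (by rwa [← hanti])
    · refine hhalf α₂ ?_
      have : α₂ + Real.pi = α₁ + 2 * Real.pi := by rw [hanti]; ring
      rwa [this]
  · -- Otherwise every direction in the circle turns out to be a symmetry direction.
    obtain ⟨s, t, hst, hstK⟩ : ∃ s t, s < t ∧ ∀ φ ∈ Icc s t, circlePt a b φ ∈ K := by
      rcases harc with h | h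
      · exact ⟨_, _, hlt, h⟩
      · exact ⟨_, _, hlt', h⟩
    have hω0 : ∀ n : ℤ, 2 * (α₂ - α₁) + n * (2 * Real.pi) ≠ 0 := by
      intro n hn
      have hpi := Real.pi_pos
      have e1 : α₂ - α₁ = (-n : ℝ) * Real.pi := by linarith
      have h0 : (0 : ℝ) < (-n : ℝ) := by
        by_contra! hc
        nlinarith
      have h2 : (-n : ℝ) < 2 := by
        by_contra! hc
        nlinarith
      have h0' : 0 < -n := by exact_mod_cast h0
      have h2' : -n < 2 := by exact_mod_cast h2
      have : n = -1 := by omega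
      apply hanti
      rw [this] at e1
      push_cast at e1
      linarith
    have hconst : ∀ u ∈ 𝓤, ∀ (w : EuclideanSpace ℝ (Fin N)) (ρ φ : ℝ), ⟪w, a⟫ = 0 →
        ⟪w, b⟫ = 0 → 0 ≤ ρ → w + ρ • circlePt a b φ ∈ B →
        ∀ ψ, u (w + ρ • circlePt a b ψ) = u (w + ρ • circlePt a b φ) := by
      intro u hu w ρ φ hwa hwb hρ hB' ψ
      have hmem : ∀ ψ, w + ρ • circlePt a b ψ ∈ B := fun ψ =>
        hB.mem_of_norm_eq (norm_add_smul_circlePt haa hbb hab hwa hwb ρ φ ψ) hB'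
      rcases hρ.eq_or_lt with rfl | hρ
      · simp
      set f : ℝ → ℝ := fun ψ => u (w + ρ • circlePt a b ψ) with hf
      have hper : Function.Periodic f (2 * Real.pi) := by
        intro x
        have := circlePt_add_int_mul_two_pi a b x 1
        rw [Int.cast_one, one_mul] at this
        simp only [hf, this]
      have hs1 : ∀ x, f (2 * α₁ + Real.pi - x) = f x := by
        intro x
        have := hsym₁ u hu _ (hmem x)
        rwa [hα₁, reflHyp_circlePt haa hbb hab hwa hwb] at this
      have hs2 : ∀ x, f (2 * α₂ + Real.pi - x) = f x := by
        intro x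
        have := hsym₂ u hu _ (hmem x)
        rwa [hα₂, reflHyp_circlePt haa hbb hab hwa hwb] at this
      have hω : Function.Periodic f (2 * (α₂ - α₁)) := by
        intro x
        rw [← hs1 x, ← hs2 (2 * α₁ + Real.pi - x)]
        congr 1; ring
      refine const_of_symm_on_Icc (f := f) hst ?_ ψ φ
      intro α hα
      refine symm_of_monotone_of_periodic hper hω hω0 ?_
      intro x hx
      have := (hKC (hstK α hα)).1.2 u hu (w + ρ • circlePt a b x) ⟨hmem x, by
        rw [inner_add_left, inner_perp_circlePt hwa hwb, real_inner_smul_left,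
          inner_circlePt haa hbb hab, zero_add]
        exact mul_pos hρ hx⟩
      rwa [reflHyp_circlePt haa hbb hab hwa hwb] at this
    have hall : range (circlePt a b) ⊆ C := by
      rintro _ ⟨α, rfl⟩
      refine ⟨⟨norm_circlePt haa hbb hab α, ?_⟩, hcP α⟩
      intro u hu x hx
      obtain ⟨w, ρ, φ, hwa, hwb, hρ, rfl⟩ := exists_polar_decomp haa hbb hab x
      rw [reflHyp_circlePt haa hbb hab hwa hwb]
      exact (hconst u hu w ρ φ hwa hwb hρ hx.1 _).le
    have hsub : range (circlePt a b) ⊆ K :=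
      (isPreconnected_range (circlePt_continuous a b)).subset_connectedComponentIn
        ⟨α₁, hα₁.symm⟩ hall
    refine ⟨p₁, hp₁.1.1, hp₁.2, ?_⟩
    intro e he heP _
    obtain ⟨φ, rfl⟩ := hcirc e heP he
    exact hsub ⟨φ, rfl⟩


end
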